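/- Preservation: If Γ ⊢ S ⇒ Γ', the store σ is well-typed for Γ (σ ⊨ Γ), and ⟨S, σ⟩ ↝ ⟨S', σ'⟩, then there exists a context Γ₁ such that Γ₁ ⊢ S' ⇒ Γ' and σ' ⊨ Γ₁. -/

import Mathlib

inductive Ty : Type
  | int
  | bool
deriving DecidableEq

inductive Expr : Type
  | int (n : ℤ)
  | tt
  | ff
  | var (x : String)
  | plus (e₁ e₂ : Expr)
  | isOp (e₁ e₂ : Expr)

inductive Val : Type
  | int (n : ℤ)
  | bool (b : Bool)

/-- A value has a type: integer values have type `Int`, booleans have type `Bool`. -/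
inductive ValHasTy : Val → Ty → Prop
  | int (n : ℤ) : ValHasTy (.int n) .int
  | bool (b : Bool) : ValHasTy (.bool b) .bool

/-- Typing contexts: finite maps from variables to types. -/
def Ctx : Type := String → Option Ty

/-- Stores: partial maps from variables to values. -/
def Store : Type := String → Option Val

/-- Expression typing `Γ ⊢ e : τ`. -/
inductive HasTy : Ctx → Expr → Ty → Prop
  | int (Γ : Ctx) (n : ℤ) : HasTy Γ (.int n) .int
  | tt (Γ : Ctx) : HasTy Γ .tt .bool
  | ff (Γ : Ctx) : HasTy Γ .ff .bool
  | var (Γ : Ctx) (x : String) (τ : Ty) : Γ x = some τ → HasTy Γ (.var x) τ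
  | plus (Γ : Ctx) (e₁ e₂ : Expr) :
      HasTy Γ e₁ .int → HasTy Γ e₂ .int → HasTy Γ (.plus e₁ e₂) .int
  | rel (Γ : Ctx) (e₁ e₂ : Expr) (τ : Ty) :
      HasTy Γ e₁ τ → HasTy Γ e₂ τ → HasTy Γ (.isOp e₁ e₂) .bool

inductive Stmt : Type
  | skip
  | letBe (x : String) (e : Expr)
  | ifThenElse (e : Expr) (s₁ s₂ : Stmt)
  | print (e : Expr)
  | seq (s₁ s₂ : Stmt)

/-- Statement typing `Γ ⊢ S ⇒ Γ'`. -/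
inductive StmtTy : Ctx → Stmt → Ctx → Prop
  | skip (Γ : Ctx) : StmtTy Γ .skip Γ
  | letBe (Γ : Ctx) (x : String) (e : Expr) (τ : Ty) :
      HasTy Γ e τ → StmtTy Γ (.letBe x e) (fun y => if y = x then some τ else Γ y)
  | ifThenElse (Γ : Ctx) (e : Expr) (s₁ s₂ : Stmt) :
      HasTy Γ e .bool → StmtTy Γ s₁ Γ → StmtTy Γ s₂ Γ →
      StmtTy Γ (.ifThenElse e s₁ s₂) Γ
  | print (Γ : Ctx) (e : Expr) (τ : Ty) : HasTy Γ e τ → StmtTy Γ (.print e) Γ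
  | seq (Γ Γ' Γ'' : Ctx) (s₁ s₂ : Stmt) :
      StmtTy Γ s₁ Γ' → StmtTy Γ' s₂ Γ'' → StmtTy Γ (.seq s₁ s₂) Γ''

/-- Big-step expression evaluation `σ ⊢ e ⇓ v`. -/
inductive Eval : Store → Expr → Val → Prop
  | int (σ : Store) (n : ℤ) : Eval σ (.int n) (.int n)
  | tt (σ : Store) : Eval σ .tt (.bool true)
  | ff (σ : Store) : Eval σ .ff (.bool false)
  | var (σ : Store) (x : String) (v : Val) : σ x = some v → Eval σ (.var x) v
  | plus (σ : Store) (e₁ e₂ : Expr) (n₁ n₂ : ℤ) :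
      Eval σ e₁ (.int n₁) → Eval σ e₂ (.int n₂) →
      Eval σ (.plus e₁ e₂) (.int (n₁ + n₂))
  | isInt (σ : Store) (e₁ e₂ : Expr) (n₁ n₂ : ℤ) :
      Eval σ e₁ (.int n₁) → Eval σ e₂ (.int n₂) →
      Eval σ (.isOp e₁ e₂) (.bool (n₁ == n₂))
  | isBool (σ : Store) (e₁ e₂ : Expr) (b₁ b₂ : Bool) :
      Eval σ e₁ (.bool b₁) → Eval σ e₂ (.bool b₂) →
      Eval σ (.isOp e₁ e₂) (.bool (b₁ == b₂))

/-- Small-step statement semantics `⟨S, σ⟩ ↝ ⟨S', σ'⟩`. -/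
inductive Step : Stmt → Store → Stmt → Store → Prop
  | letBe (σ : Store) (x : String) (e : Expr) (v : Val) :
      Eval σ e v → Step (.letBe x e) σ .skip (fun y => if y = x then some v else σ y)
  | ifTrue (σ : Store) (e : Expr) (s₁ s₂ : Stmt) :
      Eval σ e (.bool true) → Step (.ifThenElse e s₁ s₂) σ s₁ σ
  | ifFalse (σ : Store) (e : Expr) (s₁ s₂ : Stmt) :
      Eval σ e (.bool false) → Step (.ifThenElse e s₁ s₂) σ s₂ σ
  | print (σ : Store) (e : Expr) (v : Val) : Eval σ e v → Step (.print e) σ .skip σ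
  | seqSkip (σ : Store) (s₂ : Stmt) : Step (.seq .skip s₂) σ s₂ σ
  | seqStep (σ σ' : Store) (s₁ s₁' s₂ : Stmt) :
      Step s₁ σ s₁' σ' → Step (.seq s₁ s₂) σ (.seq s₁' s₂) σ'

/-- `σ ⊨ Γ`: the store is well-typed for the context. -/
def StoreTy (σ : Store) (Γ : Ctx) : Prop :=
  ∀ x τ, Γ x = some τ → ∃ v, σ x = some v ∧ ValHasTy v τ

/-- The empty typing context. -/
def emptyCtx : Ctx := fun _ => none

section

variable {σ : Store} {Γ : Ctx} {v : Val} {τ : Ty}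

theorem StoreTy.valHasTy {x : String} (hσ : StoreTy σ Γ) (hv : σ x = some v)
    (hτ : Γ x = some τ) : ValHasTy v τ := by
  obtain ⟨w, hw, hwτ⟩ := hσ x τ hτ
  obtain rfl : v = w := Option.some.inj (hv.symm.trans hw)
  exact hwτ

theorem StoreTy.update (hσ : StoreTy σ Γ) (x : String) (hv : ValHasTy v τ) :
    StoreTy (fun y => if y = x then some v else σ y)
      (fun y => if y = x then some τ else Γ y) := by
  intro y τ' hy
  by_cases hyx : y = x
  · simp only [if_pos hyx] at hy ⊢
    obtain rfl : τ = τ' := Option.some.inj hy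
    exact ⟨v, rfl, hv⟩
  · simp only [if_neg hyx] at hy ⊢
    exact hσ y τ' hy

-- No induction is needed: except for variables, the shape of `e` alone fixes both the type
-- assigned to `e` and the type of its value.
theorem Eval.valHasTy {e : Expr} (hev : Eval σ e v) (he : HasTy Γ e τ)
    (hσ : StoreTy σ Γ) : ValHasTy v τ := by
  cases hev with
  | var x v hv =>
    cases he with
    | var _ _ hτ => exact hσ.valHasTy hv hτ
  | _ => cases he; constructor

end

/-- **Preservation**: typing of statements is preserved by small steps, with a
store that remains well-typed for a suitable intermediate context. -/
theorem preservation (Γ Γ' : Ctx) (S : Stmt) (σ : Store) (S' : Stmt) (σ' : Store)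
    (hty : StmtTy Γ S Γ') (hσ : StoreTy σ Γ) (hstep : Step S σ S' σ') :
    ∃ Γ₁ : Ctx, StmtTy Γ₁ S' Γ' ∧ StoreTy σ' Γ₁ := by
  induction hstep generalizing Γ Γ' with
  | letBe σ x e v hev =>
    cases hty with
    | letBe _ _ _ τ he => exact ⟨_, .skip _, hσ.update x (hev.valHasTy he hσ)⟩
  | ifTrue =>
    cases hty with
    | ifThenElse _ _ _ _ _ h₁ _ => exact ⟨Γ, h₁, hσ⟩
  | ifFalse =>
    cases hty with
    | ifThenElse _ _ _ _ _ _ h₂ => exact ⟨Γ, h₂, hσ⟩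
  | print =>
    cases hty
    exact ⟨Γ, .skip Γ, hσ⟩
  | seqSkip =>
    cases hty with
    | seq _ _ _ _ _ h₁ h₂ => cases h₁; exact ⟨Γ, h₂, hσ⟩
  | seqStep σ σ' s₁ s₁' s₂ _ ih =>
    cases hty with
    | seq _ Γm _ _ _ h₁ h₂ =>
      obtain ⟨Γ₁, h₁', hσ'⟩ := ih Γ Γm h₁ hσ
      exact ⟨Γ₁, .seq Γ₁ Γm Γ' s₁' s₂ h₁' h₂, hσ'⟩
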